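/- arXiv:2204.00898 — 2 statements merged into one kernel-verified Lean document; each statement's English description precedes it below -/
import Mathlib

section
/- (Theorem 1, fully deterministic case.) Let X, Y, A, Z be types with deterministic MOB-MOMDP dynamics fX : X → A → X, fY : X → Y → X → Y, step (x, y) a := (fX x a, fY x y (fX x a)), and observation map obs (x, y) := (x, zobs x y) ∈ X × Z for some zobs : X → Y → Z. For every flat history policy π : List (X × Z) → A there exist a top-level policy πT : List (X × Z) → X and a bottom-level goal-conditioned policy πX : X → X → A such that for every initial state s₀ ∈ X × Y: (i) the closed-loop state trajectory and observation-history sequence of the hierarchical policy (which at each step plays a_t := πX x_t (πT h_t), where x_t is the first component of the last observation in h_t) coincide at every timestep with those of π; and (ii) at every timestep the commanded goal is reached in one step: fX x_t (πX x_t (πT h_t)) = πT h_t. In particular, for every reward function R : X × Y → ℝ, every discount γ : ℝ, and every horizon N, the discounted returns of the hierarchical policy and of π from s₀ are equal. -/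
/-- The fully observable component recorded in the last observation of a
history (with a default value for the empty history). -/
def lastX {X Z : Type*} [Inhabited X] (h : List (X × Z)) : X :=
  (h.getLast?.map Prod.fst).getD default

/-- Closed-loop run of a flat history policy `π`: at time `t` it returns the
pair (current state `s_t`, current observation history `h_t`), where
`h₀ = [obs s₀]`, `a_t = π h_t`, `s_{t+1} = step s_t a_t`, and
`h_{t+1} = h_t ++ [obs s_{t+1}]`. -/
def flatRun {X Y A Z : Type*} (step : X × Y → A → X × Y) (obs : X × Y → X × Z)
    (π : List (X × Z) → A) (s₀ : X × Y) : ℕ → (X × Y) × List (X × Z)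
  | 0 => (s₀, [obs s₀])
  | n + 1 =>
    let p := flatRun step obs π s₀ n
    let s' := step p.1 (π p.2)
    (s', p.2 ++ [obs s'])

/-!
The goal commanded after a history is the fully observable component that the flat policy is about
to produce; it is reachable in one step, so an action aiming at it attains it. That action need not
be the one the flat policy plays, but the fully observable component after the step agrees, and
`fY` sees the action only through that component, so the whole successor state agrees as well.
-/

section

variable {X Y A Z : Type*}

/-- The bottom-level policy of the construction: an action whose `fX`-successor from `x` is `g`
whenever some action has this property, and an arbitrary action otherwise. It depends on the
dynamics only, not on the flat policy to be replicated. -/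
noncomputable def reachingAction [Nonempty A] (fX : X → A → X) (x g : X) : A :=
  Function.invFun (fX x) g

theorem fX_reachingAction [Nonempty A] (fX : X → A → X) (x : X) (a : A) :
    fX x (reachingAction fX x (fX x a)) = fX x a :=
  Function.invFun_eq ⟨a, rfl⟩

theorem flatRun_congr {step : X × Y → A → X × Y} {obs : X × Y → X × Z}
    {ρ π : List (X × Z) → A} {s₀ : X × Y}
    (hstep : ∀ t, step (flatRun step obs π s₀ t).1 (ρ (flatRun step obs π s₀ t).2) =
      step (flatRun step obs π s₀ t).1 (π (flatRun step obs π s₀ t).2)) :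
    flatRun step obs ρ s₀ = flatRun step obs π s₀ := by
  funext t
  induction t with
  | zero => rfl
  | succ t ih => simp only [flatRun, ih, hstep]

variable [Inhabited X]

/-- The top-level policy of the construction: its goal is the fully observable component that the
flat policy `π` produces next. -/
def successorGoal (fX : X → A → X) (π : List (X × Z) → A) (h : List (X × Z)) : X :=
  fX (lastX h) (π h)

theorem lastX_append_singleton (h : List (X × Z)) (o : X × Z) : lastX (h ++ [o]) = o.1 := by
  simp [lastX]

theorem lastX_flatRun {obs : X × Y → X × Z} (hobs : ∀ s, (obs s).1 = s.1)
    (step : X × Y → A → X × Y) (π : List (X × Z) → A) (s₀ : X × Y) (t : ℕ) :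
    lastX (flatRun step obs π s₀ t).2 = (flatRun step obs π s₀ t).1.1 := by
  cases t with
  | zero => exact (lastX_append_singleton [] _).trans (hobs _)
  | succ t => exact (lastX_append_singleton _ _).trans (hobs _)

theorem flatRun_congr_of_factorsThrough {W : Type*} {effect : X → A → W}
    {step : X × Y → A → X × Y} {obs : X × Y → X × Z} {ρ π : List (X × Z) → A}
    (hstep : ∀ s, (step s).FactorsThrough (effect s.1)) (hobs : ∀ s, (obs s).1 = s.1)
    (heffect : ∀ h, effect (lastX h) (ρ h) = effect (lastX h) (π h)) (s₀ : X × Y) :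
    flatRun step obs ρ s₀ = flatRun step obs π s₀ := by
  refine flatRun_congr fun t => hstep _ ?_
  rw [← lastX_flatRun hobs]
  exact heffect _

end

/-- Theorem 1, fully deterministic case: every flat history policy `π` is
exactly replicated by a hierarchical HILMO policy pair `(πT, πX)` (whose
closed-loop run plays `a_t = πX x_t (πT h_t)` where `x_t` is the first
component of the last observation in `h_t`): the state trajectories and
observation histories coincide at every timestep, the commanded goal is
reached in one step at every timestep, and all discounted returns are
equal. -/
theorem hilmo_optimality_deterministic {X Y A Z : Type*} [Inhabited X]
    (fX : X → A → X) (fY : X → Y → X → Y) (zobs : X → Y → Z)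
    (step : X × Y → A → X × Y)
    (hstep : ∀ (x : X) (y : Y) (a : A), step (x, y) a = (fX x a, fY x y (fX x a)))
    (obs : X × Y → X × Z)
    (hobs : ∀ (x : X) (y : Y), obs (x, y) = (x, zobs x y))
    (π : List (X × Z) → A) :
    ∃ (πT : List (X × Z) → X) (πX : X → X → A),
      ∀ s₀ : X × Y,
        (∀ t : ℕ,
          flatRun step obs (fun h => πX (lastX h) (πT h)) s₀ t
            = flatRun step obs π s₀ t) ∧
        (∀ t : ℕ,
          fX (lastX (flatRun step obs (fun h => πX (lastX h) (πT h)) s₀ t).2)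
            (πX (lastX (flatRun step obs (fun h => πX (lastX h) (πT h)) s₀ t).2)
              (πT (flatRun step obs (fun h => πX (lastX h) (πT h)) s₀ t).2))
            = πT (flatRun step obs (fun h => πX (lastX h) (πT h)) s₀ t).2) ∧
        (∀ (R : X × Y → ℝ) (γ : ℝ) (N : ℕ),
          ∑ t ∈ Finset.range N,
              γ ^ t * R (flatRun step obs (fun h => πX (lastX h) (πT h)) s₀ t).1
            = ∑ t ∈ Finset.range N, γ ^ t * R (flatRun step obs π s₀ t).1) := by
  have : Nonempty A := ⟨π []⟩
  have hobs_fst : ∀ s, (obs s).1 = s.1 := fun s => congrArg Prod.fst (hobs s.1 s.2)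
  have hstep_factors : ∀ s, (step s).FactorsThrough (fX s.1) := by
    rintro ⟨x, y⟩ a b (hab : fX x a = fX x b)
    rw [hstep, hstep, hab]
  have hgoal : ∀ h, fX (lastX h) (reachingAction fX (lastX h) (successorGoal fX π h)) =
      successorGoal fX π h :=
    fun h => fX_reachingAction fX (lastX h) (π h)
  refine ⟨successorGoal fX π, reachingAction fX, fun s₀ => ?_⟩
  have hrun : flatRun step obs (fun h => reachingAction fX (lastX h) (successorGoal fX π h)) s₀ =
      flatRun step obs π s₀ :=
    flatRun_congr_of_factorsThrough hstep_factors hobs_fst hgoal s₀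
  exact ⟨congrFun hrun, fun t => hgoal _, fun R γ N => by rw [hrun]⟩
end

section
/- (Theorem 1, deterministic fully observable dynamics with stochastic partially observable dynamics.) Let X, Y, A, Z be types with a deterministic transition function fX : X → A → X of the fully observable component, a stochastic transition kernel TY : X → Y → X → PMF Y of the partially observable component, and a stochastic action-independent observation kernel Zk : X → Y → PMF Z (observations are (x, z) pairs, always revealing x). For a flat history policy π : List (X × Z) → A, define for each horizon N and initial state s₀ = (x₀, y₀) the N-step closed-loop trajectory distribution Traj_N(π, s₀) ∈ PMF (List ((X × Y) × (X × Z))) over joint state–observation sequences, by first sampling z₀ from Zk x₀ y₀ to form h₀ := [(x₀, z₀)], and then repeatedly, given current state (x, y) and history h, playing a := π h, setting x' := fX x a, sampling y' from TY x y x' and z' from Zk x' y', recording ((x', y'), (x', z')) and appending (x', z') to h. Then for every flat history policy π there exist πT : List (X × Z) → X and πX : X → X → A such that for every initial state s₀ and every horizon N, the trajectory distribution of the hierarchical policy (which at each step plays a := πX x (πT h), where x is the first component of the last observation in h) equals Traj_N(π, s₀); consequently, for every reward function R : X × Y → ℝ, every discount γ : ℝ, and every horizon N, the expected discounted returns of the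 two policies from s₀ coincide, and at every step the commanded goal is reached in one step: fX x (πX x (πT h)) = πT h. -/
/-- Auxiliary trajectory distribution: starting from current state `s` and
current observation history `h`, run the history policy `π` for `N` steps,
recording at each step the joint (next state, next observation) pair: play
`a := π h`, set `x' := fX s.1 a`, sample `y'` from `TY s.1 s.2 x'` and `z'`
from `Zk x' y'`, record `((x', y'), (x', z'))`, and append `(x', z')` to the
history. -/
noncomputable def trajAux {X Y A Z : Type*}
    (fX : X → A → X) (TY : X → Y → X → PMF Y) (Zk : X → Y → PMF Z)
    (π : List (X × Z) → A) :
    ℕ → X × Y → List (X × Z) → PMF (List ((X × Y) × (X × Z)))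
  | 0, _, _ => PMF.pure []
  | N + 1, s, h =>
    let x' := fX s.1 (π h)
    (TY s.1 s.2 x').bind fun y' =>
      (Zk x' y').bind fun z' =>
        (trajAux fX TY Zk π N (x', y') (h ++ [(x', z')])).map
          fun l => ((x', y'), (x', z')) :: l

/-- `N`-step closed-loop trajectory distribution `Traj_N(π, s₀)` of a history
policy `π` from initial state `s₀`: first sample `z₀` from `Zk x₀ y₀` to form
the initial history `[(x₀, z₀)]`, then run `π` for `N` steps. -/
noncomputable def traj {X Y A Z : Type*}
    (fX : X → A → X) (TY : X → Y → X → PMF Y) (Zk : X → Y → PMF Z)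
    (π : List (X × Z) → A) (N : ℕ) (s₀ : X × Y) :
    PMF (List ((X × Y) × (X × Z))) :=
  (Zk s₀.1 s₀.2).bind fun z₀ => trajAux fX TY Zk π N s₀ [(s₀.1, z₀)]

/-- Discounted return of a recorded trajectory. -/
def listReturn {X Y Z : Type*} (R : X × Y → ℝ) (γ : ℝ) :
    List ((X × Y) × (X × Z)) → ℝ
  | [] => 0
  | p :: l => R p.1 + γ * listReturn R γ l

/-!
The action enters the dynamics only through the next observable component it produces. Hence a
top level that commands the successor `π` would produce, and a bottom level that picks any action
producing that successor, together drive the system exactly as `π` does, even though the action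
played may differ from that of `π`.
-/

section Trajectories

variable {X Y A Z : Type*} {fX : X → A → X} {π₁ π₂ : List (X × Z) → A}

theorem trajAux_congr (TY : X → Y → X → PMF Y) (Zk : X → Y → PMF Z)
    (hstep : ∀ h x z, fX x (π₁ (h ++ [(x, z)])) = fX x (π₂ (h ++ [(x, z)])))
    (N : ℕ) (s : X × Y) (h : List (X × Z)) (z : Z) :
    trajAux fX TY Zk π₁ N s (h ++ [(s.1, z)]) = trajAux fX TY Zk π₂ N s (h ++ [(s.1, z)]) := by
  induction N generalizing s h z with
  | zero => rfl
  | succ N ih =>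
    have ih_next (x' : X) (y' : Y) (z' : Z) := ih (x', y') (h ++ [(s.1, z)]) z'
    simp only [trajAux, hstep, ih_next]

theorem traj_congr (TY : X → Y → X → PMF Y) (Zk : X → Y → PMF Z)
    (hstep : ∀ h x z, fX x (π₁ (h ++ [(x, z)])) = fX x (π₂ (h ++ [(x, z)])))
    (N : ℕ) (s₀ : X × Y) :
    traj fX TY Zk π₁ N s₀ = traj fX TY Zk π₂ N s₀ :=
  congrArg (PMF.bind _) (funext (trajAux_congr TY Zk hstep N s₀ []))

end Trajectories

section HierarchicalPolicies

variable {X Y A Z : Type*} [Inhabited X]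

@[simp]
theorem lastX_concat (h : List (X × Z)) (x : X) (z : Z) : lastX (h ++ [(x, z)]) = x := by
  simp [lastX]

/-- The flat history policy executed by a hierarchical (HILMO) policy `(πT, πX)`. It is reducible
so that it is identified with the lambda term by which the pair is usually spelled out. -/
abbrev hierarchicalPolicy (πT : List (X × Z) → X) (πX : X → X → A) : List (X × Z) → A :=
  fun h => πX (lastX h) (πT h)

/-- The top-level policy induced by a flat history policy `π`: its goal is the fully observable
component to which `π` would lead in one step. -/
def inducedGoal (fX : X → A → X) (π : List (X × Z) → A) (h : List (X × Z)) : X :=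
  fX (lastX h) (π h)

variable {fX : X → A → X} {πX : X → X → A}

theorem hierarchicalPolicy_reaches_inducedGoal (hπX : ∀ x a, fX x (πX x (fX x a)) = fX x a)
    (π : List (X × Z) → A) (h : List (X × Z)) :
    fX (lastX h) (hierarchicalPolicy (inducedGoal fX π) πX h) = inducedGoal fX π h :=
  hπX (lastX h) (π h)

theorem traj_hierarchicalPolicy_inducedGoal (TY : X → Y → X → PMF Y) (Zk : X → Y → PMF Z)
    (hπX : ∀ x a, fX x (πX x (fX x a)) = fX x a)
    (π : List (X × Z) → A) (N : ℕ) (s₀ : X × Y) :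
    traj fX TY Zk (hierarchicalPolicy (inducedGoal fX π) πX) N s₀ = traj fX TY Zk π N s₀ := by
  refine traj_congr TY Zk (fun h x z => ?_) N s₀
  simpa only [inducedGoal, lastX_concat] using
    hierarchicalPolicy_reaches_inducedGoal hπX π (h ++ [(x, z)])

end HierarchicalPolicies

/-- Theorem 1 for deterministic fully observable dynamics with stochastic
partially observable dynamics and observations: every flat history policy `π`
is exactly replicated by a hierarchical HILMO policy pair `(πT, πX)` (which
plays `a := πX x (πT h)` where `x` is the first component of the last
observation in `h`): the closed-loop trajectory distributions coincide for
every initial state and horizon, hence so do expected discounted returns, and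
the commanded goal is always reached in one step. -/
theorem hilmo_optimality_stochastic_y {X Y A Z : Type*} [Inhabited X]
    (fX : X → A → X) (TY : X → Y → X → PMF Y) (Zk : X → Y → PMF Z)
    (π : List (X × Z) → A) :
    ∃ (πT : List (X × Z) → X) (πX : X → X → A),
      (∀ (s₀ : X × Y) (N : ℕ),
        traj fX TY Zk (fun h => πX (lastX h) (πT h)) N s₀
          = traj fX TY Zk π N s₀) ∧
      (∀ (R : X × Y → ℝ) (γ : ℝ) (N : ℕ) (s₀ : X × Y),
        ∑' l : List ((X × Y) × (X × Z)),
            ((traj fX TY Zk (fun h => πX (lastX h) (πT h)) N s₀) l).toReal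
              * listReturn R γ l
          = ∑' l : List ((X × Y) × (X × Z)),
              ((traj fX TY Zk π N s₀) l).toReal * listReturn R γ l) ∧
      (∀ h : List (X × Z), fX (lastX h) (πX (lastX h) (πT h)) = πT h) := by
  have : Nonempty A := ⟨π []⟩
  let πX : X → X → A := fun x => Function.invFun (fX x)
  have hπX (x : X) (a : A) : fX x (πX x (fX x a)) = fX x a := Function.apply_invFun_apply
  have htraj := traj_hierarchicalPolicy_inducedGoal TY Zk hπX π
  refine ⟨inducedGoal fX π, πX, fun s₀ N => htraj N s₀, fun R γ N s₀ => ?_,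
    hierarchicalPolicy_reaches_inducedGoal hπX π⟩
  rw [htraj N s₀]
end
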